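/- (Theorem 4) Let F be a field, D a finite-dimensional division algebra over F whose center is F, R a commutative F-algebra, and D_R = D ⊗_F R. Let P be a two-sided prime ideal of D_R and N a submodule of (D_R)^n. Then the intersection of all P-prime submodules of (D_R)^n containing N equals the intersection of all submodules of the form C_{P,u}, with u ∈ (D_R)^n ∖ P^n, that contain N (both intersections taken to be all of (D_R)^n when the respective family is empty). -/

import Mathlib

/-!
Let `Q` be a `P`-prime submodule of `A ^ n`, where `A = D ⊗ R`, and let `m ∉ Q`. The kernels of the
`A`-linear maps `A ^ n → A ⧸ P` are exactly the `C_{P,u}`, so everything comes down to finding an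
`A`-linear map `A ^ n ⧸ Q → A ⧸ P` that does not kill `m`. An `R`-linear one exists because
`A ^ n ⧸ Q` is finite and torsion-free over the domain `R ⧸ p`, with `p = P ∩ R`. The Casimir
elements of `A`, which come from the isomorphism `D ⊗ Dᵐᵒᵖ ≃ End D` of the central simple algebra
`D`, average it to `A`-linear maps, and since they generate the unit ideal of `A ⊗ Aᵐᵒᵖ`, one of
the averages does not kill `m` either.
-/

open TensorProduct

/-- A submodule `N` of a module `M` is *prime* if for every scalar `a` and `m ∈ M` with
`(a * x) • m ∈ N` for all `x`, either `a • M ⊆ N` or `m ∈ N`. -/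
def Submodule.IsPrimeSubmodule {A : Type*} [Ring A] {M : Type*} [AddCommGroup M] [Module A M]
    (N : Submodule A M) : Prop :=
  ∀ (a : A) (m : M), (∀ x : A, (a * x) • m ∈ N) → (∀ m' : M, a • m' ∈ N) ∨ m ∈ N

/-- For a *two-sided* ideal `P` of a ring `A` (given as a left ideal `P : Ideal A` which is
also closed under right multiplication) and `u ∈ A^n`, the left submodule
`C_{P,u} = {m ∈ A^n | m 0 * u 0 + ⋯ + m (n-1) * u (n-1) ∈ P}`. -/
def CPu {A : Type*} [Ring A] {n : ℕ} (P : Ideal A) (u : Fin n → A) :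
    Submodule A (Fin n → A) where
  carrier := {m | (∑ j, m j * u j) ∈ P}
  add_mem' := by
    intro a b ha hb
    simp only [Set.mem_setOf_eq, Pi.add_apply, add_mul, Finset.sum_add_distrib] at *
    exact add_mem ha hb
  zero_mem' := by simp
  smul_mem' := by
    intro c m hm
    simp only [Set.mem_setOf_eq, Pi.smul_apply, smul_eq_mul, mul_assoc, ← Finset.mul_sum] at *
    exact Ideal.mul_mem_left _ _ hm

section TorsionFree

open scoped nonZeroDivisors

variable {S M : Type*} [CommRing S] [IsDomain S] [AddCommGroup M] [Module S M]
  [Module.IsTorsionFree S M]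

theorem exists_linearMap_fractionRing_apply_ne_zero {x : M} (hx : x ≠ 0) :
    ∃ f : M →ₗ[S] FractionRing S, f x ≠ 0 := by
  let ι := LocalizedModule.mkLinearMap S⁰ M
  have hιx : ι x ≠ 0 := fun h ↦ by
    obtain ⟨s, hs⟩ := (IsLocalizedModule.eq_zero_iff S⁰ ι).1 h
    exact (smul_eq_zero.1 hs).elim (nonZeroDivisors.coe_ne_zero s) hx
  obtain ⟨f, hf⟩ : ∃ f : Module.Dual (FractionRing S) (LocalizedModule S⁰ M), f (ι x) ≠ 0 := by
    simpa using mt (Module.forall_dual_apply_eq_zero_iff (FractionRing S) (ι x)).1 hιx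
  exact ⟨f.restrictScalars S ∘ₗ ι, hf⟩

theorem exists_dual_apply_ne_zero [Module.Finite S M] {x : M} (hx : x ≠ 0) :
    ∃ g : Module.Dual S M, g x ≠ 0 := by
  obtain ⟨f, hf⟩ := exists_linearMap_fractionRing_apply_ne_zero (S := S) hx
  obtain ⟨a, ha, hint⟩ : IsFractional S⁰ (LinearMap.range f) :=
    FractionalIdeal.isFractional_of_fg (Submodule.fg_range f)
  have haf (y : M) : (a • f) y ∈ Set.range (Algebra.linearMap S (FractionRing S)) :=
    hint (f y) ⟨y, rfl⟩
  let g := (a • f).codRestrictOfInjective (Algebra.linearMap S (FractionRing S))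
    (IsFractionRing.injective S _) haf
  have hg : algebraMap S (FractionRing S) (g x) = a • f x :=
    (a • f).codRestrictOfInjective_comp_apply (Algebra.linearMap S (FractionRing S))
      (IsFractionRing.injective S _) haf x
  refine ⟨g, fun hgx ↦ ?_⟩
  rw [hgx, map_zero, eq_comm, smul_eq_zero] at hg
  exact hg.elim (nonZeroDivisors.ne_zero ha) hf

end TorsionFree

section PrimeModule

variable {R M : Type*} [CommRing R] [AddCommGroup M] [Module R M]

theorem mem_annihilator_or_eq_zero_of_isPrimeSubmodule_bot
    (h : (⊥ : Submodule R M).IsPrimeSubmodule) {r : R} {x : M} (hrx : r • x = 0) :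
    r ∈ Module.annihilator R M ∨ x = 0 := by
  simpa [Module.mem_annihilator] using h r x fun s ↦ by simp [mul_smul, smul_comm r s, hrx]

theorem isPrime_annihilator_of_isPrimeSubmodule_bot [Nontrivial M]
    (h : (⊥ : Submodule R M).IsPrimeSubmodule) : (Module.annihilator R M).IsPrime := by
  refine ⟨fun htop ↦ ?_, fun {r s} hrs ↦ or_iff_not_imp_right.2 fun hs ↦ ?_⟩
  · exact not_subsingleton M (Module.annihilator_eq_top_iff.1 htop)
  · obtain ⟨x, hx⟩ : ∃ x : M, s • x ≠ 0 := by simpa [Module.mem_annihilator] using hs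
    refine (mem_annihilator_or_eq_zero_of_isPrimeSubmodule_bot h ?_).resolve_right hx
    rw [← mul_smul, Module.mem_annihilator.1 hrs]

theorem exists_linearMap_quotient_annihilator_apply_ne_zero [Module.Finite R M]
    (h : (⊥ : Submodule R M).IsPrimeSubmodule) {x : M} (hx : x ≠ 0) :
    ∃ g : M →ₗ[R] R ⧸ Module.annihilator R M, g x ≠ 0 := by
  let : Module (R ⧸ Module.annihilator R M) M := Module.quotientAnnihilator
  have : IsScalarTower R (R ⧸ Module.annihilator R M) M :=
    (Module.isTorsionBySet_annihilator R M).isScalarTower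
  have : Nontrivial M := ⟨x, 0, hx⟩
  have : (Module.annihilator R M).IsPrime := isPrime_annihilator_of_isPrimeSubmodule_bot h
  have : Module.Finite (R ⧸ Module.annihilator R M) M :=
    Module.Finite.of_restrictScalars_finite R _ _
  have : Module.IsTorsionFree (R ⧸ Module.annihilator R M) M := by
    refine Module.isTorsionFree_iff_smul_eq_zero.2 fun s y hsy ↦ ?_
    obtain ⟨r, rfl⟩ := Ideal.Quotient.mk_surjective s
    rw [Ideal.Quotient.eq_zero_iff_mem]
    exact mem_annihilator_or_eq_zero_of_isPrimeSubmodule_bot h hsy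
  obtain ⟨g, hg⟩ := exists_dual_apply_ne_zero (S := R ⧸ Module.annihilator R M) hx
  exact ⟨g.restrictScalars R, hg⟩

end PrimeModule

section PrimeSubmodule

variable {A M : Type*} [Ring A] [AddCommGroup M] [Module A M]

theorem isPrimeSubmodule_restrictScalars (R : Type*) [CommRing R] [Algebra R A] [Module R M]
    [IsScalarTower R A M] {Q : Submodule A M} (hQ : Q.IsPrimeSubmodule) :
    (Q.restrictScalars R).IsPrimeSubmodule := by
  intro r m h
  have hr : r • m ∈ Q := by simpa using h 1
  simpa only [algebraMap_smul] using! hQ (algebraMap R A r) m fun a ↦ by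
    rw [Algebra.commutes, mul_smul, algebraMap_smul]
    exact Q.smul_mem a hr

theorem isPrimeSubmodule_bot_quotient {Q : Submodule A M} (hQ : Q.IsPrimeSubmodule) :
    (⊥ : Submodule A (M ⧸ Q)).IsPrimeSubmodule := by
  intro a m h
  obtain ⟨m, rfl⟩ := Submodule.Quotient.mk_surjective Q m
  simp only [← Submodule.Quotient.mk_smul, Submodule.Quotient.forall, Submodule.mem_bot,
    Submodule.Quotient.mk_eq_zero] at h ⊢
  exact hQ a m h

end PrimeSubmodule

section Hirata

/-- An element `e = ∑ xᵢ ⊗ yᵢ` of the enveloping algebra `A ⊗ Aᵐᵒᵖ` is a *Casimir element* if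
`∑ (y xᵢ) ⊗ yᵢ = ∑ xᵢ ⊗ (yᵢ y)` for all `y : A`. Such an `e` turns every `R`-linear map `f` between
`A`-modules into the `A`-linear map `m ↦ ∑ xᵢ f(yᵢ m)`. The right multiplication by `y` is written
as the left multiplication by `1 ⊗ y` because the second factor is the opposite algebra. -/
def IsCasimirElement (R : Type*) {A : Type*} [CommRing R] [Ring A] [Algebra R A]
    (e : A ⊗[R] Aᵐᵒᵖ) : Prop :=
  ∀ y : A, (y ⊗ₜ 1) * e = (1 ⊗ₜ MulOpposite.op y) * e

/-- An algebra is *Hirata separable* if `1 = ∑ (aₖ ⊗ 1) eₖ` for some `aₖ : A` and Casimir elements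
`eₖ`, here expressed by the left ideal that the Casimir elements generate. This weakening of being
Azumaya is stable under base change for formal reasons. -/
def IsHirataSeparable (R A : Type*) [CommRing R] [Ring A] [Algebra R A] : Prop :=
  Ideal.span {e : A ⊗[R] Aᵐᵒᵖ | IsCasimirElement R e} = ⊤

section Averaging

variable (R A M V : Type*) [CommRing R] [Ring A] [Algebra R A]
  [AddCommGroup M] [Module R M] [Module A M] [IsScalarTower R A M]
  [AddCommGroup V] [Module R V] [Module A V] [IsScalarTower R A V]

/-- The action of the enveloping algebra on the `R`-linear maps between two `A`-modules, in which
`a ⊗ b` sends `f` to `x ↦ a f(b x)`. -/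
def envelopingAction : A ⊗[R] Aᵐᵒᵖ →ₐ[R] Module.End R (M →ₗ[R] V) :=
  Algebra.TensorProduct.lift (Algebra.lsmul R R (M →ₗ[R] V))
    (AlgHom.ofLinearMap ((LinearMap.llcomp R M M V).flip ∘ₗ (Algebra.lsmul R R M).toLinearMap ∘ₗ
        (MulOpposite.opLinearEquiv R).symm.toLinearMap)
      (by ext; simp) (fun a b ↦ by ext; simp))
    (fun a b ↦ (commute_iff_eq _ _).2 (by ext; simp))

variable {R A M V}

@[simp]
theorem envelopingAction_tmul_apply (a : A) (b : Aᵐᵒᵖ) (f : M →ₗ[R] V) (x : M) :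
    envelopingAction R A M V (a ⊗ₜ b) f x = a • f (b.unop • x) := by
  simp [envelopingAction]

theorem IsCasimirElement.envelopingAction_apply_smul {e : A ⊗[R] Aᵐᵒᵖ} (he : IsCasimirElement R e)
    (f : M →ₗ[R] V) (y : A) (x : M) :
    envelopingAction R A M V e f (y • x) = y • envelopingAction R A M V e f x := by
  have h := congr(envelopingAction R A M V $(he y) f x)
  simpa using h.symm

/-- The `A`-linear map obtained by letting a Casimir element act on an `R`-linear map `f`, like the
average of `f` over a finite group. -/
def IsCasimirElement.average {e : A ⊗[R] Aᵐᵒᵖ} (he : IsCasimirElement R e) (f : M →ₗ[R] V) :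
    M →ₗ[A] V where
  __ := envelopingAction R A M V e f
  map_smul' := he.envelopingAction_apply_smul f

theorem IsCasimirElement.envelopingAction_mul_apply_mem_span {e : A ⊗[R] Aᵐᵒᵖ}
    (he : IsCasimirElement R e) (t : A ⊗[R] Aᵐᵒᵖ) (f : M →ₗ[R] V) (x : M) :
    envelopingAction R A M V (t * e) f x ∈
      Submodule.span A (Set.range fun φ : M →ₗ[A] V ↦ φ x) := by
  induction t using TensorProduct.induction_on with
  | zero => simp
  | add s t hs ht => simpa [add_mul] using add_mem hs ht
  | tmul a b =>
    rw [map_mul, Module.End.mul_apply, envelopingAction_tmul_apply,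
      he.envelopingAction_apply_smul]
    have hφ : envelopingAction R A M V e f x ∈
        Submodule.span A (Set.range fun φ : M →ₗ[A] V ↦ φ x) :=
      Submodule.subset_span ⟨he.average f, rfl⟩
    exact Submodule.smul_mem _ _ (Submodule.smul_mem _ _ hφ)

theorem IsHirataSeparable.apply_mem_span (h : IsHirataSeparable R A) (f : M →ₗ[R] V) (x : M) :
    f x ∈ Submodule.span A (Set.range fun φ : M →ₗ[A] V ↦ φ x) := by
  have hmem_span (t : A ⊗[R] Aᵐᵒᵖ) : envelopingAction R A M V t f x ∈
      Submodule.span A (Set.range fun φ : M →ₗ[A] V ↦ φ x) := by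
    have ht : t ∈ Ideal.span {e : A ⊗[R] Aᵐᵒᵖ | IsCasimirElement R e} := h ▸ Submodule.mem_top
    induction ht using Submodule.closure_induction with
    | zero => simp
    | add s t _ _ hs ht => simpa using add_mem hs ht
    | smul_mem t e he => exact IsCasimirElement.envelopingAction_mul_apply_mem_span he t f x
  simpa using hmem_span 1

theorem IsHirataSeparable.exists_linearMap_apply_ne_zero (h : IsHirataSeparable R A)
    {f : M →ₗ[R] V} {x : M} (hfx : f x ≠ 0) : ∃ φ : M →ₗ[A] V, φ x ≠ 0 := by
  by_contra! hφ
  exact hfx (by simpa [hφ] using h.apply_mem_span f x)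

end Averaging

section Constructions

variable {R A : Type*} [CommRing R] [Ring A] [Algebra R A]

theorem IsHirataSeparable.of_isAzumaya [IsAzumaya R A] : IsHirataSeparable R A := by
  obtain ⟨n, π, σ, -, -, hσ⟩ := Module.Finite.exists_comp_eq_id_of_projective R A
  have hμ : Function.Bijective (AlgHom.mulLeftRight R A) := IsAzumaya.bij
  choose e he using fun k : Fin n ↦
    hμ.2 (Algebra.linearMap R A ∘ₗ LinearMap.proj k ∘ₗ σ)
  have hcas (k : Fin n) : IsCasimirElement R (e k) := fun y ↦ hμ.1 <| by
    ext a
    simp [he, AlgHom.mulLeftRight_apply, (Algebra.commutes _ y).symm]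
  have hone : (1 : A ⊗[R] Aᵐᵒᵖ) = ∑ k, (π (Pi.single k 1) ⊗ₜ 1) * e k := hμ.1 <| by
    ext a
    rw [map_one, Module.End.one_apply]
    calc a = π (σ a) := congr($hσ a).symm
      _ = ∑ k, π (Pi.single k (σ a k)) := by rw [← map_sum, Finset.univ_sum_single]
      _ = ∑ k, σ a k • π (Pi.single k 1) := by
        simp only [← map_smul, ← Pi.single_smul, smul_eq_mul, mul_one]
      _ = _ := by simp [he, AlgHom.mulLeftRight_apply, Algebra.smul_def, Algebra.commutes]
  rw [IsHirataSeparable, Ideal.eq_top_iff_one, hone]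
  exact sum_mem fun k _ ↦ Ideal.mul_mem_left _ _ (Ideal.subset_span (hcas k))

theorem IsHirataSeparable.of_span_range_eq_top {F D : Type*} [CommRing F] [Ring D] [Algebra F D]
    [Algebra F R] [Algebra F A] [IsScalarTower F R A] (hD : IsHirataSeparable F D) (ι : D →ₐ[F] A)
    (hι : Submodule.span R (Set.range ι) = ⊤) : IsHirataSeparable R A := by
  let j : D ⊗[F] Dᵐᵒᵖ →ₐ[F] A ⊗[R] Aᵐᵒᵖ := Algebra.TensorProduct.lift
    (Algebra.TensorProduct.includeLeft.comp ι)
    ((Algebra.TensorProduct.includeRight.restrictScalars F).comp (AlgHom.op ι))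
    (fun a b ↦ (commute_iff_eq _ _).2 (by simp))
  have hj (a : D) (b : Dᵐᵒᵖ) : j (a ⊗ₜ b) = ι a ⊗ₜ MulOpposite.op (ι b.unop) := by simp [j]
  have hcas (e : D ⊗[F] Dᵐᵒᵖ) (he : IsCasimirElement F e) : IsCasimirElement R (j e) := by
    intro y
    have hy : y ∈ Submodule.span R (Set.range ι) := hι ▸ Submodule.mem_top
    induction hy using Submodule.span_induction with
    | mem y hy =>
      obtain ⟨d, rfl⟩ := hy
      simpa [hj] using congr(j $(he d))
    | zero => simp
    | add y z _ _ hy hz => simp [TensorProduct.add_tmul, TensorProduct.tmul_add, add_mul, hy, hz]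
    | smul r y _ hy =>
      rw [← TensorProduct.smul_tmul', MulOpposite.op_smul, TensorProduct.tmul_smul, smul_mul_assoc,
        smul_mul_assoc, hy]
  rw [IsHirataSeparable, eq_top_iff, ← Ideal.map_top j, ← hD, Ideal.map_span]
  exact Ideal.span_mono (Set.image_subset_iff.2 hcas)

theorem IsHirataSeparable.tensorProduct_rightAlgebra {F D : Type*} [CommRing F] [Ring D]
    [Algebra F D] [Algebra F R] (hD : IsHirataSeparable F D) :
    letI : Algebra R (D ⊗[F] R) := Algebra.TensorProduct.rightAlgebra
    IsHirataSeparable R (D ⊗[F] R) := by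
  let : Algebra R (D ⊗[F] R) := Algebra.TensorProduct.rightAlgebra
  refine hD.of_span_range_eq_top Algebra.TensorProduct.includeLeft (eq_top_iff.2 fun x _ ↦ ?_)
  induction x using TensorProduct.induction_on with
  | zero => exact zero_mem _
  | add x y hx hy => exact add_mem (hx trivial) (hy trivial)
  | tmul d r =>
    have hdr : d ⊗ₜ[F] r = r • (d ⊗ₜ[F] 1) := by
      rw [Algebra.smul_def, Algebra.TensorProduct.right_algebraMap_apply]
      simp
    rw [hdr]
    exact Submodule.smul_mem _ _ (Submodule.subset_span ⟨d, rfl⟩)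

end Constructions

end Hirata

section CentralSimple

attribute [local instance] TensorProduct.Algebra.module

section Enveloping

variable (F D : Type*) [CommRing F] [Ring D] [Algebra F D]

variable {F D} in
theorem mulLeftRight_apply_eq_smul (t : D ⊗[F] Dᵐᵒᵖ) (x : D) :
    AlgHom.mulLeftRight F D t x = t • x := rfl

theorem isSimpleModule_enveloping [IsSimpleRing D] : IsSimpleModule (D ⊗[F] Dᵐᵒᵖ) D := by
  refine { toNontrivial := inferInstance, eq_bot_or_eq_top := fun N ↦ ?_ }
  have hmem (a b : D) {x : D} (hx : x ∈ N) : a * x * b ∈ N := by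
    simpa only [← mulLeftRight_apply_eq_smul, AlgHom.mulLeftRight_apply, MulOpposite.unop_op] using
      N.smul_mem (a ⊗ₜ MulOpposite.op b) hx
  let I : Ideal D := { N with smul_mem' := fun a x hx ↦ by simpa using hmem a 1 hx }
  have hI : I.IsTwoSided :=
    ⟨fun {a} b (ha : a ∈ N) ↦ show a * b ∈ N by simpa using hmem 1 b ha⟩
  simpa only [SetLike.ext_iff] using! (isSimpleRing_iff_isTwoSided_imp.1 ‹_›).2 I hI

theorem exists_forall_end_enveloping_apply_eq_smul [Algebra.IsCentral F D]
    (φ : Module.End (D ⊗[F] Dᵐᵒᵖ) D) : ∃ c : F, ∀ x, φ x = c • x := by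
  have hφ (a b x : D) : φ (a * x * b) = a * φ x * b := by
    simpa only [← mulLeftRight_apply_eq_smul, AlgHom.mulLeftRight_apply, MulOpposite.unop_op] using
      φ.map_smul (a ⊗ₜ MulOpposite.op b) x
  have hleft (x : D) : φ x = x * φ 1 := by simpa using hφ x 1 1
  have hright (x : D) : φ x = φ 1 * x := by simpa using hφ 1 x 1
  have hcenter : φ 1 ∈ Subalgebra.center F D :=
    Subalgebra.mem_center_iff.2 fun x ↦ by rw [← hleft, ← hright]
  obtain ⟨c, hc⟩ := Algebra.mem_bot.1 (Algebra.IsCentral.out hcenter)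
  exact ⟨c, fun x ↦ by rw [hright, Algebra.smul_def]; exact congr($hc.symm * x)⟩

end Enveloping

variable (F D : Type*) [Field F] [Ring D] [Algebra F D] [FiniteDimensional F D]
  [Algebra.IsCentral F D] [IsSimpleRing D]

theorem mulLeftRight_surjective : Function.Surjective (AlgHom.mulLeftRight F D) := by
  intro f
  have := isSimpleModule_enveloping F D
  let f' : Module.End (Module.End (D ⊗[F] Dᵐᵒᵖ) D) D :=
    { f with
      map_smul' := fun φ x ↦ by
        obtain ⟨c, hc⟩ := exists_forall_end_enveloping_apply_eq_smul F D φ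
        simp [hc] }
  classical
  obtain ⟨t, ht⟩ := jacobson_density f' (Finset.univ.image (Module.finBasis F D))
  refine ⟨t, (Module.finBasis F D).ext fun i ↦ (ht _ ?_).symm⟩
  simp

theorem isAzumaya_of_isCentral_of_isSimpleRing : IsAzumaya F D where
  bij := by
    have hsurj := mulLeftRight_surjective F D
    refine ⟨?_, hsurj⟩
    refine (LinearMap.injective_iff_surjective_of_finrank_eq_finrank
      (f := (AlgHom.mulLeftRight F D).toLinearMap) ?_).2 hsurj
    rw [Module.finrank_tensorProduct, Module.finrank_linearMap,
      (MulOpposite.opLinearEquiv F).finrank_eq]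

end CentralSimple

section FinitePrimeModule

variable {R A M : Type*} [CommRing R] [Ring A] [Algebra R A]
  [AddCommGroup M] [Module R M] [Module A M] [IsScalarTower R A M]

variable (R A M) in
theorem exists_injective_quotient_annihilator :
    ∃ ι : (R ⧸ Module.annihilator R M) →ₗ[R] A ⧸ Module.annihilator A M, Function.Injective ι := by
  let π : R →ₗ[R] A ⧸ Module.annihilator A M :=
    (Module.annihilator A M).mkQ.restrictScalars R ∘ₗ Algebra.linearMap R A
  have hπ : LinearMap.ker π = Module.annihilator R M := by
    rw [← Module.comap_annihilator (R := A)]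
    ext r
    exact Submodule.Quotient.mk_eq_zero _
  exact ⟨(Module.annihilator R M).liftQ π hπ.ge,
    LinearMap.ker_eq_bot.1 (Submodule.ker_liftQ_eq_bot' _ _ hπ.symm)⟩

theorem IsHirataSeparable.exists_linearMap_quotient_annihilator_apply_ne_zero [Module.Finite R A]
    [Module.Finite A M] (h : IsHirataSeparable R A) (hM : (⊥ : Submodule A M).IsPrimeSubmodule)
    {x : M} (hx : x ≠ 0) : ∃ φ : M →ₗ[A] A ⧸ Module.annihilator A M, φ x ≠ 0 := by
  have : Module.Finite R M := Module.Finite.trans A M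
  obtain ⟨g, hg⟩ := _root_.exists_linearMap_quotient_annihilator_apply_ne_zero
    (isPrimeSubmodule_restrictScalars R hM) hx
  obtain ⟨ι, hι⟩ := exists_injective_quotient_annihilator R A M
  exact h.exists_linearMap_apply_ne_zero (f := ι ∘ₗ g)
    (by simpa only [LinearMap.comp_apply, map_ne_zero_iff ι hι] using hg)

end FinitePrimeModule

section CPu

variable {A : Type*} [Ring A] {n : ℕ}

theorem mem_CPu {P : Ideal A} {u m : Fin n → A} : m ∈ CPu P u ↔ ∑ j, m j * u j ∈ P := Iff.rfl

theorem exists_ker_eq_CPu (P : Ideal A) (φ : (Fin n → A) →ₗ[A] A ⧸ P) :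
    ∃ u : Fin n → A, LinearMap.ker φ = CPu P u := by
  choose u hu using fun j ↦ P.mkQ_surjective (φ (Pi.single j 1))
  have hφ : φ = P.mkQ ∘ₗ Fintype.linearCombination A u := by
    refine LinearMap.pi_ext' fun j ↦ LinearMap.ext_ring ?_
    simp [← hu, Fintype.linearCombination_apply_single]
  refine ⟨u, ?_⟩
  ext m
  rw [LinearMap.mem_ker, hφ, LinearMap.comp_apply, Submodule.mkQ_apply,
    Submodule.Quotient.mk_eq_zero, Fintype.linearCombination_apply]
  rfl

theorem exists_notMem_of_CPu_ne_top {P : Ideal A} {u : Fin n → A} (h : CPu P u ≠ ⊤) :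
    ∃ j, u j ∉ P := by
  contrapose! h
  exact eq_top_iff.2 fun m _ ↦ P.sum_mem fun j _ ↦ P.mul_mem_left _ (h j)

theorem smul_mem_CPu {P : Ideal A} [P.IsTwoSided] {a : A} (ha : a ∈ P) (u m : Fin n → A) :
    a • m ∈ CPu P u := by
  rw [mem_CPu]
  simpa only [Pi.smul_apply, smul_eq_mul, mul_assoc] using
    P.sum_mem fun j _ ↦ P.mul_mem_right (m j * u j) ha

theorem isPrimeSubmodule_CPu {P : Ideal A} [P.IsTwoSided]
    (hP : ∀ x y : A, (∀ a : A, x * a * y ∈ P) → x ∈ P ∨ y ∈ P) (u : Fin n → A) :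
    (CPu P u).IsPrimeSubmodule := by
  intro a m h
  have ha (x : A) : a * x * ∑ j, m j * u j ∈ P := by
    simpa only [mem_CPu, Pi.smul_apply, smul_eq_mul, mul_assoc, Finset.mul_sum] using h x
  exact (hP a _ ha).imp_left fun ha ↦ smul_mem_CPu ha u

theorem forall_smul_mem_CPu_iff {P : Ideal A} [P.IsTwoSided]
    (hP : ∀ x y : A, (∀ a : A, x * a * y ∈ P) → x ∈ P ∨ y ∈ P) {u : Fin n → A}
    (hu : ∃ j, u j ∉ P) {a : A} : (∀ m, a • m ∈ CPu P u) ↔ a ∈ P := by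
  refine ⟨fun h ↦ ?_, fun ha ↦ smul_mem_CPu ha u⟩
  obtain ⟨j, hj⟩ := hu
  refine (hP a (u j) fun x ↦ ?_).resolve_right hj
  simpa [mem_CPu, Pi.single_apply] using h (Pi.single j x)

theorem annihilator_quotient_eq {P : Ideal A} {M : Type*} [AddCommGroup M] [Module A M]
    {Q : Submodule A M} (hQP : ∀ a : A, (∀ m : M, a • m ∈ Q) ↔ a ∈ P) :
    Module.annihilator A (M ⧸ Q) = P := by
  ext a
  rw [← hQP, Module.mem_annihilator]
  simp [Submodule.Quotient.forall, ← Submodule.Quotient.mk_smul, Submodule.Quotient.mk_eq_zero]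

theorem IsHirataSeparable.exists_le_CPu_and_notMem {R : Type*} [CommRing R] [Algebra R A]
    [Module.Finite R A] (h : IsHirataSeparable R A) {P : Ideal A} {Q : Submodule A (Fin n → A)}
    (hQ : Q.IsPrimeSubmodule) (hQP : ∀ a : A, (∀ m : Fin n → A, a • m ∈ Q) ↔ a ∈ P)
    {m : Fin n → A} (hm : m ∉ Q) : ∃ u : Fin n → A, Q ≤ CPu P u ∧ m ∉ CPu P u := by
  obtain rfl := annihilator_quotient_eq hQP
  obtain ⟨φ, hφ⟩ := h.exists_linearMap_quotient_annihilator_apply_ne_zero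
    (isPrimeSubmodule_bot_quotient hQ) (mt (Submodule.Quotient.mk_eq_zero Q).1 hm)
  obtain ⟨u, hu⟩ := exists_ker_eq_CPu _ (φ ∘ₗ Q.mkQ)
  exact ⟨u, by simpa [← hu] using Q.ker_mkQ.ge.trans (LinearMap.ker_le_ker_comp Q.mkQ φ),
    by rwa [← hu]⟩

end CPu

theorem KNP_eq_inf_CPu_tensor_general
    (R A : Type*) [CommRing R] [Ring A] [Algebra R A] [Module.Finite R A]
    (hA : IsHirataSeparable R A) {n : ℕ} (P : Ideal A)
    (hPtwoSided : ∀ a ∈ P, ∀ x : A, a * x ∈ P)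
    (hPprime : ∀ x y : A, (∀ a : A, x * a * y ∈ P) → x ∈ P ∨ y ∈ P)
    (N : Submodule A (Fin n → A)) :
    sInf {Q : Submodule A (Fin n → A) |
        (Q.IsPrimeSubmodule ∧ (∀ a : A, (∀ m : Fin n → A, a • m ∈ Q) ↔ a ∈ P)) ∧ N ≤ Q} =
      sInf {Q : Submodule A (Fin n → A) |
        (∃ u : Fin n → A, (∃ j, u j ∉ P) ∧ Q = CPu P u) ∧ N ≤ Q} := by
  have : P.IsTwoSided := ⟨fun b ha ↦ hPtwoSided _ ha b⟩
  apply le_antisymm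
  · refine sInf_le_sInf ?_
    rintro _ ⟨⟨u, hu, rfl⟩, hN⟩
    exact ⟨⟨isPrimeSubmodule_CPu hPprime u, fun a ↦ forall_smul_mem_CPu_iff hPprime hu⟩, hN⟩
  · refine le_sInf ?_
    rintro Q ⟨⟨hQ, hQP⟩, hN⟩ m hm
    by_contra hmQ
    obtain ⟨u, hQu, hmu⟩ := hA.exists_le_CPu_and_notMem hQ hQP hmQ
    have hu : ∃ j, u j ∉ P := exists_notMem_of_CPu_ne_top fun h ↦ hmu (h ▸ Submodule.mem_top)
    exact hmu (Submodule.mem_sInf.1 hm (CPu P u) ⟨⟨u, hu, rfl⟩, hN.trans hQu⟩)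

/-- **Theorem 4.** Let `D` be a finite-dimensional central division algebra over a field `F`,
`R` a commutative `F`-algebra, `D_R = D ⊗_F R`, and `P` a two-sided prime ideal of `D_R`.
For every submodule `N` of `(D_R)^n`, the intersection of all `P`-prime submodules
containing `N` equals the intersection of all submodules of the form `C_{P,u}`
(`u ∈ (D_R)^n ∖ P^n`) containing `N`. -/
theorem KNP_eq_inf_CPu_tensor
    (F : Type*) [Field F] (D : Type*) [DivisionRing D] [Algebra F D]
    [FiniteDimensional F D] [Algebra.IsCentral F D]
    (R : Type*) [CommRing R] [Algebra F R] {n : ℕ}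
    (P : Ideal (D ⊗[F] R))
    (hPtwoSided : ∀ a ∈ P, ∀ x : D ⊗[F] R, a * x ∈ P)
    (hPne : P ≠ ⊤)
    (hPprime : ∀ x y : D ⊗[F] R, (∀ a : D ⊗[F] R, x * a * y ∈ P) → x ∈ P ∨ y ∈ P)
    (N : Submodule (D ⊗[F] R) (Fin n → D ⊗[F] R)) :
    sInf {Q : Submodule (D ⊗[F] R) (Fin n → D ⊗[F] R) |
        (Q.IsPrimeSubmodule ∧ (∀ a : D ⊗[F] R, (∀ m : Fin n → D ⊗[F] R, a • m ∈ Q) ↔ a ∈ P))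
          ∧ N ≤ Q} =
      sInf {Q : Submodule (D ⊗[F] R) (Fin n → D ⊗[F] R) |
        (∃ u : Fin n → D ⊗[F] R, (∃ j, u j ∉ P) ∧ Q = CPu P u) ∧ N ≤ Q} := by
  let : Algebra R (D ⊗[F] R) := Algebra.TensorProduct.rightAlgebra
  have : Module.Finite R (D ⊗[F] R) :=
    Module.Finite.equiv (Algebra.TensorProduct.commRight F R D).toLinearEquiv
  have : IsAzumaya F D := isAzumaya_of_isCentral_of_isSimpleRing F D
  exact KNP_eq_inf_CPu_tensor_general R (D ⊗[F] R)
    IsHirataSeparable.of_isAzumaya.tensorProduct_rightAlgebra P hPtwoSided hPprime N
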